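/- arXiv:1608.01233 — 9 statements merged into one kernel-verified Lean document; each statement's English description precedes it below -/
import Mathlib

section
/- Let α > 0 and x₀ > 0 be real numbers, and define φ(t,u) = (1 - e^{αt}(1 - e^{-αu}))^{-x₀/α} for real t, u with e^{αt}(1 - e^{-αu}) < 1. Then φ satisfies the partial differential equation ∂φ/∂t(t,u) + (1 - e^{αu})·∂φ/∂u(t,u) = 0 at every point (t,u) with e^{αt}(1 - e^{-αu}) < 1, and φ(0,u) = e^{u x₀} for every real u. -/
/-!
The function `ξ(t,u) = e^{αt}(1 - e^{-αu})` is constant along the characteristics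
`du/dt = 1 - e^{αu}`, so every differentiable function of `ξ` solves the transport equation.
Here `φ = (1 - ξ)^{-x₀/α}`, and `1 - ξ(0,u) = e^{-αu}` gives the initial value.
-/

open Real

theorem deriv_comp_add_smul_deriv_comp_eq_zero {𝕜 E : Type*} [NontriviallyNormedField 𝕜]
    [NormedAddCommGroup E] [NormedSpace 𝕜 E] {f : 𝕜 → E} {ξ : 𝕜 → 𝕜 → 𝕜} {t u c : 𝕜}
    (hf : DifferentiableAt 𝕜 f (ξ t u)) (hξt : DifferentiableAt 𝕜 (fun s => ξ s u) t)
    (hξu : DifferentiableAt 𝕜 (fun w => ξ t w) u)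
    (hξ : deriv (fun s => ξ s u) t + c * deriv (fun w => ξ t w) u = 0) :
    deriv (fun s => f (ξ s u)) t + c • deriv (fun w => f (ξ t w)) u = 0 := by
  have hderiv_t : deriv (fun s => f (ξ s u)) t = deriv (fun s => ξ s u) t • deriv f (ξ t u) :=
    (hf.hasDerivAt.scomp t hξt.hasDerivAt).deriv
  have hderiv_u : deriv (fun w => f (ξ t w)) u = deriv (fun w => ξ t w) u • deriv f (ξ t u) :=
    (hf.hasDerivAt.scomp u hξu.hasDerivAt).deriv
  rw [hderiv_t, hderiv_u, smul_smul, ← add_smul, hξ, zero_smul]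

/-- The first integral `ξ(t,u) = e^{αt}(1 - e^{-αu})` of the characteristic equation
`du/dt = 1 - e^{αu}`, through which the moment generating function depends on `(t,u)`. -/
noncomputable def expFirstIntegral (α t u : ℝ) : ℝ :=
  exp (α * t) * (1 - exp (-α * u))

namespace expFirstIntegral

theorem hasDerivAt_left (α t u : ℝ) :
    HasDerivAt (fun s => expFirstIntegral α s u) (α * expFirstIntegral α t u) t := by
  have hexp : HasDerivAt (fun s => exp (α * s)) (exp (α * t) * α) t :=
    (hasDerivAt_const_mul α).exp
  exact (hexp.mul_const _).congr_deriv (by rw [expFirstIntegral]; ring)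

theorem hasDerivAt_right (α t u : ℝ) :
    HasDerivAt (fun w => expFirstIntegral α t w) (α * exp (α * t) * exp (-α * u)) u := by
  have hexp : HasDerivAt (fun w => exp (-α * w)) (exp (-α * u) * -α) u :=
    (hasDerivAt_const_mul (-α)).exp
  exact ((hexp.const_sub 1).const_mul _).congr_deriv (by ring)

theorem deriv_left_add_mul_deriv_right_eq_zero (α t u : ℝ) :
    deriv (fun s => expFirstIntegral α s u) t +
      (1 - exp (α * u)) * deriv (fun w => expFirstIntegral α t w) u = 0 := by
  have hexp : exp (α * u) * exp (-α * u) = 1 := by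
    rw [neg_mul, ← exp_add, add_neg_cancel, exp_zero]
  rw [(hasDerivAt_left α t u).deriv, (hasDerivAt_right α t u).deriv, expFirstIntegral]
  linear_combination (-α * exp (α * t)) * hexp

theorem deriv_comp_left_add_smul_deriv_comp_right_eq_zero {E : Type*} [NormedAddCommGroup E]
    [NormedSpace ℝ E] {f : ℝ → E} {α t u : ℝ}
    (hf : DifferentiableAt ℝ f (expFirstIntegral α t u)) :
    deriv (fun s => f (expFirstIntegral α s u)) t +
      (1 - exp (α * u)) • deriv (fun w => f (expFirstIntegral α t w)) u = 0 :=
  deriv_comp_add_smul_deriv_comp_eq_zero hf (hasDerivAt_left α t u).differentiableAt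
    (hasDerivAt_right α t u).differentiableAt (deriv_left_add_mul_deriv_right_eq_zero α t u)

theorem one_sub_zero_left (α u : ℝ) : 1 - expFirstIntegral α 0 u = exp (-α * u) := by
  rw [expFirstIntegral, mul_zero, exp_zero, one_mul, sub_sub_cancel]

end expFirstIntegral

theorem stmt_0_general (α x₀ : ℝ) (hα : α ≠ 0) (φ : ℝ → ℝ → ℝ)
    (hφ : ∀ t u : ℝ, φ t u = (1 - exp (α * t) * (1 - exp (-α * u))) ^ (-x₀ / α)) :
    (∀ t u : ℝ, exp (α * t) * (1 - exp (-α * u)) < 1 →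
      deriv (fun s => φ s u) t + (1 - exp (α * u)) * deriv (fun w => φ t w) u = 0) ∧
    (∀ u : ℝ, φ 0 u = exp (u * x₀)) := by
  obtain rfl : φ = fun t u => (1 - expFirstIntegral α t u) ^ (-x₀ / α) := funext₂ hφ
  refine ⟨fun t u hlt => ?_, fun u => ?_⟩
  · have hdiff : DifferentiableAt ℝ (fun y : ℝ => (1 - y) ^ (-x₀ / α)) (expFirstIntegral α t u) :=
      (differentiableAt_id.const_sub 1).rpow_const (Or.inl (sub_pos.mpr hlt).ne')
    exact expFirstIntegral.deriv_comp_left_add_smul_deriv_comp_right_eq_zero hdiff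
  · have hexponent : -α * u * (-x₀ / α) = u * x₀ := by field_simp
    calc (1 - expFirstIntegral α 0 u) ^ (-x₀ / α)
        = exp (-α * u) ^ (-x₀ / α) := by rw [expFirstIntegral.one_sub_zero_left]
      _ = exp (u * x₀) := by rw [← exp_mul, hexponent]

/-- The moment generating function
`φ(t,u) = (1 - e^{αt}(1 - e^{-αu}))^{-x₀/α}` of the one-dimensional
Pólya–Eggenberger-like continuum random walk satisfies
`∂φ/∂t + (1 - e^{αu})·∂φ/∂u = 0` wherever `e^{αt}(1 - e^{-αu}) < 1`,
and `φ(0,u) = e^{u x₀}`. -/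
theorem stmt_0 (α x₀ : ℝ) (hα : 0 < α) (hx₀ : 0 < x₀)
    (φ : ℝ → ℝ → ℝ)
    (hφ : ∀ t u : ℝ,
      φ t u = (1 - Real.exp (α * t) * (1 - Real.exp (-α * u))) ^ (-x₀ / α)) :
    (∀ t u : ℝ, Real.exp (α * t) * (1 - Real.exp (-α * u)) < 1 →
      deriv (fun s => φ s u) t + (1 - Real.exp (α * u)) * deriv (fun w => φ t w) u = 0) ∧
    (∀ u : ℝ, φ 0 u = Real.exp (u * x₀)) :=
  stmt_0_general α x₀ hα.ne' φ hφ
end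

section
/- Let α > 0 and x₀ > 0 be real numbers and let s be a real number with αs < 1. Then lim_{t→∞} (1 - e^{αt}(1 - e^{-α s e^{-αt}}))^{-x₀/α} = (1 - αs)^{-x₀/α}. -/
open Filter Real Topology

theorem tendsto_inv_mul_exp_mul_sub_one (c : ℝ) :
    Tendsto (fun u : ℝ => u⁻¹ * (exp (c * u) - 1)) (𝓝[≠] 0) (𝓝 c) := by
  have hderiv : HasDerivAt (fun u : ℝ => exp (c * u)) c 0 := by
    simpa using (hasDerivAt_const_mul (x := (0 : ℝ)) c).exp
  simpa using hderiv.tendsto_slope_zero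

theorem tendsto_exp_neg_mul_atTop_nhdsGT {α : ℝ} (hα : 0 < α) :
    Tendsto (fun t : ℝ => exp (-α * t)) atTop (𝓝[>] 0) :=
  tendsto_exp_atBot_nhdsGT.comp (tendsto_id.const_mul_atTop_of_neg (neg_lt_zero.2 hα))

-- In the variable `u = exp (-α * t)` this is the derivative at `0` of `u ↦ exp (c * u)`.
theorem tendsto_exp_mul_exp_mul_exp_neg_sub_one_atTop {α : ℝ} (hα : 0 < α) (c : ℝ) :
    Tendsto (fun t : ℝ => exp (α * t) * (exp (c * exp (-α * t)) - 1)) atTop (𝓝 c) := by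
  have hu : Tendsto (fun t : ℝ => exp (-α * t)) atTop (𝓝[≠] 0) :=
    (tendsto_exp_neg_mul_atTop_nhdsGT hα).mono_right (nhdsGT_le_nhdsNE 0)
  refine ((tendsto_inv_mul_exp_mul_sub_one c).comp hu).congr fun t => ?_
  simp only [Function.comp_apply, ← exp_neg, neg_mul, neg_neg]

theorem stmt_1_general {α s : ℝ} (hα : 0 < α) (hs : α * s < 1) (p : ℝ) :
    Tendsto
      (fun t : ℝ => (1 - exp (α * t) * (1 - exp (-α * (s * exp (-α * t))))) ^ p)
      atTop (𝓝 ((1 - α * s) ^ p)) := by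
  have hbase : Tendsto
      (fun t : ℝ => 1 - exp (α * t) * (1 - exp (-α * (s * exp (-α * t)))))
      atTop (𝓝 (1 - α * s)) := by
    convert (tendsto_exp_mul_exp_mul_exp_neg_sub_one_atTop hα (-α * s)).const_add 1 using 2 with t
    · rw [mul_assoc (-α) s]
      ring
    · ring
  exact hbase.rpow_const (Or.inl (sub_pos.2 hs).ne')

/-- For `α > 0`, `x₀ > 0` and `αs < 1`,
`lim_{t→∞} (1 - e^{αt}(1 - e^{-α s e^{-αt}}))^{-x₀/α} = (1 - αs)^{-x₀/α}`. -/
theorem stmt_1 (α x₀ s : ℝ) (hα : 0 < α) (hx₀ : 0 < x₀) (hs : α * s < 1) :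
    Filter.Tendsto
      (fun t : ℝ =>
        (1 - Real.exp (α * t) * (1 - Real.exp (-α * (s * Real.exp (-α * t))))) ^ (-x₀ / α))
      Filter.atTop (nhds ((1 - α * s) ^ (-x₀ / α))) :=
  stmt_1_general hα hs (-x₀ / α)
end

section
/- Let γ > 0, X₀ ≥ 0 and λ ≥ X₀ be real numbers. Define N(t,u) = 1 + e^{-2γt+γu} + e^{γu} - e^{-2γt}, D(t,u) = 1 - e^{-2γt+γu} + e^{γu} + e^{-2γt}, and η(t,u) = (N(t,u)/D(t,u))^{X₀/γ} · (D(t,u)/2)^{λ/γ}. Then for all t > 0 and all real u, η satisfies ∂η/∂t(t,u) + (e^{γu} - e^{-γu})·∂η/∂u(t,u) + λ(1 - e^{γu})·η(t,u) = 0, and η(0,u) = e^{u X₀} for every real u. -/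
/-!
With `b = e^{γu}`, let `L = ∂/∂t + (b - b⁻¹) ∂/∂u`. Both `1 + b` and `e^{-2γt} (b - 1)` solve
`L f = γ (b - 1) f`, hence so do their sum `N` and their difference `D`. As `L` is a derivation,
`N / D` and all its powers are annihilated by `L`, while `L (D / 2)^p = p γ (b - 1) (D / 2)^p`;
the exponent `p = lam / γ` produces the required rate `lam (b - 1)`.
-/

open Real

/-- At the point `(t, u)`, the function `f` has both partial derivatives and satisfies the linear
transport equation `∂f/∂t + c ∂f/∂u = r f`. The speed `c` and the rate `r` are the values at
`(t, u)` of the coefficients of the equation. -/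
structure IsTransportSolutionAt (c r : ℝ) (f : ℝ → ℝ → ℝ) (t u : ℝ) : Prop where
  differentiableAt_time : DifferentiableAt ℝ (fun s => f s u) t
  differentiableAt_space : DifferentiableAt ℝ (fun w => f t w) u
  deriv_add_mul_deriv :
    deriv (fun s => f s u) t + c * deriv (fun w => f t w) u = r * f t u

namespace IsTransportSolutionAt

variable {c r r₁ r₂ t u : ℝ} {f g : ℝ → ℝ → ℝ}

theorem of_hasDerivAt {ft fu : ℝ} (ht : HasDerivAt (fun s => f s u) ft t)
    (hu : HasDerivAt (fun w => f t w) fu u) (h : ft + c * fu = r * f t u) :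
    IsTransportSolutionAt c r f t u :=
  ⟨ht.differentiableAt, hu.differentiableAt, by rwa [ht.deriv, hu.deriv]⟩

theorem add (hf : IsTransportSolutionAt c r f t u) (hg : IsTransportSolutionAt c r g t u) :
    IsTransportSolutionAt c r (fun s w => f s w + g s w) t u :=
  of_hasDerivAt (hf.differentiableAt_time.hasDerivAt.add hg.differentiableAt_time.hasDerivAt)
    (hf.differentiableAt_space.hasDerivAt.add hg.differentiableAt_space.hasDerivAt)
    (by linear_combination hf.deriv_add_mul_deriv + hg.deriv_add_mul_deriv)

theorem sub (hf : IsTransportSolutionAt c r f t u) (hg : IsTransportSolutionAt c r g t u) :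
    IsTransportSolutionAt c r (fun s w => f s w - g s w) t u :=
  of_hasDerivAt (hf.differentiableAt_time.hasDerivAt.sub hg.differentiableAt_time.hasDerivAt)
    (hf.differentiableAt_space.hasDerivAt.sub hg.differentiableAt_space.hasDerivAt)
    (by linear_combination hf.deriv_add_mul_deriv - hg.deriv_add_mul_deriv)

theorem mul (hf : IsTransportSolutionAt c r₁ f t u) (hg : IsTransportSolutionAt c r₂ g t u) :
    IsTransportSolutionAt c (r₁ + r₂) (fun s w => f s w * g s w) t u :=
  of_hasDerivAt (hf.differentiableAt_time.hasDerivAt.mul hg.differentiableAt_time.hasDerivAt)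
    (hf.differentiableAt_space.hasDerivAt.mul hg.differentiableAt_space.hasDerivAt)
    (by linear_combination g t u * hf.deriv_add_mul_deriv + f t u * hg.deriv_add_mul_deriv)

theorem div (hf : IsTransportSolutionAt c r₁ f t u) (hg : IsTransportSolutionAt c r₂ g t u)
    (hg₀ : g t u ≠ 0) :
    IsTransportSolutionAt c (r₁ - r₂) (fun s w => f s w / g s w) t u := by
  refine of_hasDerivAt
    (hf.differentiableAt_time.hasDerivAt.div hg.differentiableAt_time.hasDerivAt hg₀)
    (hf.differentiableAt_space.hasDerivAt.div hg.differentiableAt_space.hasDerivAt hg₀) ?_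
  field_simp
  linear_combination g t u * hf.deriv_add_mul_deriv - f t u * hg.deriv_add_mul_deriv

theorem div_const (hf : IsTransportSolutionAt c r f t u) (k : ℝ) :
    IsTransportSolutionAt c r (fun s w => f s w / k) t u :=
  of_hasDerivAt (hf.differentiableAt_time.hasDerivAt.div_const k)
    (hf.differentiableAt_space.hasDerivAt.div_const k)
    (by linear_combination hf.deriv_add_mul_deriv / k)

theorem rpow_const (hf : IsTransportSolutionAt c r f t u) (hf₀ : f t u ≠ 0) (p : ℝ) :
    IsTransportSolutionAt c (p * r) (fun s w => f s w ^ p) t u := by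
  refine of_hasDerivAt (hf.differentiableAt_time.hasDerivAt.rpow_const (Or.inl hf₀))
    (hf.differentiableAt_space.hasDerivAt.rpow_const (Or.inl hf₀)) ?_
  have hpow : f t u ^ (p - 1) * f t u = f t u ^ p := by
    rw [rpow_sub_one hf₀, div_mul_cancel₀ _ hf₀]
  linear_combination p * f t u ^ (p - 1) * hf.deriv_add_mul_deriv + p * r * hpow

end IsTransportSolutionAt

/-- The numerator `N(t,u)` of the moment generating function, split as the sum of two solutions of
the same transport equation. -/
noncomputable def mgfNumerator (γ t u : ℝ) : ℝ :=
  (exp (γ * u) + 1) + exp (-2 * γ * t) * (exp (γ * u) - 1)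

/-- The denominator `D(t,u)` of the moment generating function, split as the difference of the two
solutions whose sum is `mgfNumerator`. -/
noncomputable def mgfDenominator (γ t u : ℝ) : ℝ :=
  (exp (γ * u) + 1) - exp (-2 * γ * t) * (exp (γ * u) - 1)

/-- The moment generating function `η(t,u)` of the first coordinate of the walk started at `X₀`
with invariant total `lam`. -/
noncomputable def ehrenfestMGF (γ X₀ lam t u : ℝ) : ℝ :=
  (mgfNumerator γ t u / mgfDenominator γ t u) ^ (X₀ / γ) * (mgfDenominator γ t u / 2) ^ (lam / γ)

section Positivity

variable {γ t : ℝ}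

theorem abs_exp_mul_exp_sub_one_lt (h : 0 ≤ γ * t) (u : ℝ) :
    |exp (-2 * γ * t) * (exp (γ * u) - 1)| < exp (γ * u) + 1 := by
  have hdecay : exp (-2 * γ * t) ≤ 1 := exp_le_one_iff.mpr (by linarith)
  calc |exp (-2 * γ * t) * (exp (γ * u) - 1)|
      = exp (-2 * γ * t) * |exp (γ * u) - 1| := by rw [abs_mul, abs_exp]
    _ ≤ |exp (γ * u) - 1| := mul_le_of_le_one_left (abs_nonneg _) hdecay
    _ < exp (γ * u) + 1 := abs_lt.mpr ⟨by linarith [exp_pos (γ * u)], by linarith⟩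

theorem mgfNumerator_pos (h : 0 ≤ γ * t) (u : ℝ) : 0 < mgfNumerator γ t u :=
  neg_lt_iff_pos_add'.mp (neg_lt_of_abs_lt (abs_exp_mul_exp_sub_one_lt h u))

theorem mgfDenominator_pos (h : 0 ≤ γ * t) (u : ℝ) : 0 < mgfDenominator γ t u :=
  sub_pos.mpr (lt_of_abs_lt (abs_exp_mul_exp_sub_one_lt h u))

end Positivity

section Transport

theorem exp_sub_exp_neg_mul_exp (x : ℝ) :
    (exp x - exp (-x)) * exp x = (exp x - 1) * (exp x + 1) := by
  have hinv : exp (-x) * exp x = 1 := by rw [← exp_add, neg_add_cancel, exp_zero]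
  linear_combination -hinv

theorem hasDerivAt_exp_const_mul (k x : ℝ) :
    HasDerivAt (fun y => exp (k * y)) (exp (k * x) * k) x := by
  simpa only [id, mul_one] using ((hasDerivAt_id x).const_mul k).exp

variable (γ t u : ℝ)

theorem isTransportSolutionAt_exp_time (c k : ℝ) :
    IsTransportSolutionAt c k (fun s _ => exp (k * s)) t u :=
  .of_hasDerivAt (hasDerivAt_exp_const_mul k t) (hasDerivAt_const u _) (by ring)

theorem isTransportSolutionAt_exp_add_one :
    IsTransportSolutionAt (exp (γ * u) - exp (-γ * u)) (γ * (exp (γ * u) - 1))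
      (fun _ w => exp (γ * w) + 1) t u := by
  refine .of_hasDerivAt (hasDerivAt_const t _) ((hasDerivAt_exp_const_mul γ u).add_const 1) ?_
  rw [neg_mul]
  linear_combination γ * exp_sub_exp_neg_mul_exp (γ * u)

theorem isTransportSolutionAt_exp_sub_one :
    IsTransportSolutionAt (exp (γ * u) - exp (-γ * u)) (γ * (exp (γ * u) + 1))
      (fun _ w => exp (γ * w) - 1) t u := by
  refine .of_hasDerivAt (hasDerivAt_const t _) ((hasDerivAt_exp_const_mul γ u).sub_const 1) ?_
  rw [neg_mul]
  linear_combination γ * exp_sub_exp_neg_mul_exp (γ * u)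

theorem isTransportSolutionAt_exp_mul_exp_sub_one :
    IsTransportSolutionAt (exp (γ * u) - exp (-γ * u)) (γ * (exp (γ * u) - 1))
      (fun s w => exp (-2 * γ * s) * (exp (γ * w) - 1)) t u := by
  have hrate : γ * (exp (γ * u) - 1) = -2 * γ + γ * (exp (γ * u) + 1) := by ring
  rw [hrate]
  exact (isTransportSolutionAt_exp_time t u _ _).mul (isTransportSolutionAt_exp_sub_one γ t u)

theorem isTransportSolutionAt_mgfNumerator :
    IsTransportSolutionAt (exp (γ * u) - exp (-γ * u)) (γ * (exp (γ * u) - 1))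
      (mgfNumerator γ) t u :=
  (isTransportSolutionAt_exp_add_one γ t u).add (isTransportSolutionAt_exp_mul_exp_sub_one γ t u)

theorem isTransportSolutionAt_mgfDenominator :
    IsTransportSolutionAt (exp (γ * u) - exp (-γ * u)) (γ * (exp (γ * u) - 1))
      (mgfDenominator γ) t u :=
  (isTransportSolutionAt_exp_add_one γ t u).sub (isTransportSolutionAt_exp_mul_exp_sub_one γ t u)

variable {γ t u}

theorem isTransportSolutionAt_ehrenfestMGF (X₀ lam : ℝ) (hγ : γ ≠ 0)
    (hN : mgfNumerator γ t u ≠ 0) (hD : mgfDenominator γ t u ≠ 0) :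
    IsTransportSolutionAt (exp (γ * u) - exp (-γ * u)) (lam * (exp (γ * u) - 1))
      (ehrenfestMGF γ X₀ lam) t u := by
  have hden := isTransportSolutionAt_mgfDenominator γ t u
  have hratio := (isTransportSolutionAt_mgfNumerator γ t u).div hden hD
  have hrate : lam * (exp (γ * u) - 1) =
      X₀ / γ * (γ * (exp (γ * u) - 1) - γ * (exp (γ * u) - 1)) +
        lam / γ * (γ * (exp (γ * u) - 1)) := by
    field_simp
    ring
  rw [hrate]
  exact (hratio.rpow_const (div_ne_zero hN hD) _).mul
    ((hden.div_const 2).rpow_const (div_ne_zero hD two_ne_zero) _)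

end Transport

theorem ehrenfestMGF_zero {γ : ℝ} (hγ : γ ≠ 0) (X₀ lam u : ℝ) :
    ehrenfestMGF γ X₀ lam 0 u = exp (u * X₀) := by
  have hN : mgfNumerator γ 0 u = 2 * exp (γ * u) := by
    rw [mgfNumerator, mul_zero, exp_zero]
    ring
  have hD : mgfDenominator γ 0 u = 2 := by
    rw [mgfDenominator, mul_zero, exp_zero]
    ring
  calc ehrenfestMGF γ X₀ lam 0 u = exp (γ * u) ^ (X₀ / γ) := by
        rw [ehrenfestMGF, hN, hD, mul_div_cancel_left₀ _ two_ne_zero, div_self two_ne_zero,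
          one_rpow, mul_one]
    _ = exp (γ * u * (X₀ / γ)) := (exp_mul _ _).symm
    _ = exp (u * X₀) := by
        congr 1
        field_simp

theorem stmt_2_general (γ X₀ lam : ℝ) (hγ : γ ≠ 0)
    (N D η : ℝ → ℝ → ℝ)
    (hN : ∀ t u : ℝ, N t u =
      1 + exp (-2 * γ * t + γ * u) + exp (γ * u) - exp (-2 * γ * t))
    (hD : ∀ t u : ℝ, D t u =
      1 - exp (-2 * γ * t + γ * u) + exp (γ * u) + exp (-2 * γ * t))
    (hη : ∀ t u : ℝ, η t u = (N t u / D t u) ^ (X₀ / γ) * (D t u / 2) ^ (lam / γ)) :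
    (∀ t u : ℝ, 0 ≤ γ * t →
      IsTransportSolutionAt (exp (γ * u) - exp (-γ * u)) (lam * (exp (γ * u) - 1)) η t u) ∧
    (∀ u : ℝ, η 0 u = exp (u * X₀)) := by
  obtain rfl : N = mgfNumerator γ := by
    ext t u
    rw [hN, mgfNumerator, exp_add]
    ring
  obtain rfl : D = mgfDenominator γ := by
    ext t u
    rw [hD, mgfDenominator, exp_add]
    ring
  obtain rfl : η = ehrenfestMGF γ X₀ lam := funext₂ hη
  exact ⟨fun t u h => isTransportSolutionAt_ehrenfestMGF X₀ lam hγ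
      (mgfNumerator_pos h u).ne' (mgfDenominator_pos h u).ne',
    ehrenfestMGF_zero hγ X₀ lam⟩

/-- The moment generating function
`η(t,u) = (N(t,u)/D(t,u))^{X₀/γ} · (D(t,u)/2)^{λ/γ}` of the first coordinate of the
Ehrenfest-like continuum random walk satisfies
`∂η/∂t + (e^{γu} - e^{-γu})·∂η/∂u + λ(1 - e^{γu})·η = 0` for `t > 0`,
and `η(0,u) = e^{u X₀}`. -/
theorem stmt_2 (γ X₀ lam : ℝ) (hγ : 0 < γ) (hX₀ : 0 ≤ X₀) (hlam : X₀ ≤ lam)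
    (N D η : ℝ → ℝ → ℝ)
    (hN : ∀ t u : ℝ, N t u =
      1 + Real.exp (-2 * γ * t + γ * u) + Real.exp (γ * u) - Real.exp (-2 * γ * t))
    (hD : ∀ t u : ℝ, D t u =
      1 - Real.exp (-2 * γ * t + γ * u) + Real.exp (γ * u) + Real.exp (-2 * γ * t))
    (hη : ∀ t u : ℝ, η t u = (N t u / D t u) ^ (X₀ / γ) * (D t u / 2) ^ (lam / γ)) :
    (∀ t u : ℝ, 0 < t →
      deriv (fun s => η s u) t
        + (Real.exp (γ * u) - Real.exp (-γ * u)) * deriv (fun w => η t w) u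
        + lam * (1 - Real.exp (γ * u)) * η t u = 0) ∧
    (∀ u : ℝ, η 0 u = Real.exp (u * X₀)) := by
  obtain ⟨htransport, hinitial⟩ := stmt_2_general γ X₀ lam hγ.ne' N D η hN hD hη
  exact ⟨fun t u ht => by
    linear_combination (htransport t u (mul_pos hγ ht).le).deriv_add_mul_deriv, hinitial⟩
end

section
/- Let γ > 0 and 0 ≤ X₀ < Y₀ be real numbers, and set λ = Y₀ - X₀. Define η(t,u) = (e^{γu} - γt(e^{γu} - 1))^{X₀/γ} / (1 - γt(e^{γu} - 1))^{Y₀/γ}. Then at every point (t,u) with 1 - γt(e^{γu} - 1) > 0 and e^{γu} - γt(e^{γu} - 1) > 0, η satisfies ∂η/∂t(t,u) + (2 - e^{γu} - e^{-γu})·∂η/∂u(t,u) + λ(1 - e^{γu})·η(t,u) = 0, and η(0,u) = e^{u X₀} for every real u. -/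
/-!
Write `E = e^{γu}`, `A = E - γt(E - 1)` and `B = 1 - γt(E - 1)`. Since
`2 - E - E⁻¹ = -(E - 1)² / E`, the transport operator `D = ∂ₜ + (2 - E - E⁻¹) ∂ᵤ` satisfies
`D E = -γ(E - 1)²`, hence `D B = -γ(E - 1) B` and, because `A = E + B - 1`, also
`D A = -γ(E - 1) A`. Thus `A` and `B` are scaled by `D` by the same factor `c = -γ(E - 1)`, and
`η = A ^ (X₀ / γ) / B ^ (Y₀ / γ)` is scaled by `(X₀ / γ - Y₀ / γ) c = λ(E - 1)`.
-/

section LineDeriv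

variable {𝕜 E F : Type*} [NontriviallyNormedField 𝕜]

lemma deriv_smul_add_deriv_smul_eq_lineDeriv [NormedAddCommGroup F] [NormedSpace 𝕜 F]
    {f : 𝕜 × 𝕜 → F} {t u : 𝕜} (hf : DifferentiableAt 𝕜 f (t, u)) (a b : 𝕜) :
    a • deriv (fun s => f (s, u)) t + b • deriv (fun w => f (t, w)) u =
      lineDeriv 𝕜 f (t, u) (a, b) := by
  have h_fst : HasDerivAt (fun s => f (s, u)) (fderiv 𝕜 f (t, u) (1, 0)) t :=
    hf.hasFDerivAt.comp_hasDerivAt t ((hasDerivAt_id t).prodMk (hasDerivAt_const t u))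
  have h_snd : HasDerivAt (fun w => f (t, w)) (fderiv 𝕜 f (t, u) (0, 1)) u :=
    hf.hasFDerivAt.comp_hasDerivAt u ((hasDerivAt_const u t).prodMk (hasDerivAt_id u))
  rw [h_fst.deriv, h_snd.deriv, hf.lineDeriv_eq_fderiv, ← map_smul, ← map_smul, ← map_add]
  simp

lemma hasLineDerivAt_div_of_mul_self [AddCommGroup E] [Module 𝕜 E] {f g : E → 𝕜} {x v : E}
    {c d : 𝕜} (hf : HasLineDerivAt 𝕜 f (c * f x) x v) (hg : HasLineDerivAt 𝕜 g (d * g x) x v)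
    (hgx : g x ≠ 0) :
    HasLineDerivAt 𝕜 (fun y => f y / g y) ((c - d) * (f x / g x)) x v := by
  refine (HasDerivAt.fun_div hf hg (by simpa using hgx)).congr_deriv ?_
  simp only [zero_smul, add_zero]
  field_simp

lemma hasLineDerivAt_rpow_const_of_mul_self [AddCommGroup E] [Module ℝ E] {f : E → ℝ} {x v : E}
    {c : ℝ} (hf : HasLineDerivAt ℝ f (c * f x) x v) (hfx : f x ≠ 0) (a : ℝ) :
    HasLineDerivAt ℝ (fun y => f y ^ a) (a * c * f x ^ a) x v := by
  refine (HasDerivAt.rpow_const hf (Or.inl (by simpa using hfx))).congr_deriv ?_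
  simp only [zero_smul, add_zero, Real.rpow_sub_one hfx]
  field_simp

end LineDeriv

section Hill

open Real

/-- The coefficient `2 - e^{γu} - e^{-γu}` of `∂/∂u` in the equation for the moment generating
function. -/
noncomputable def hillSpeed (γ u : ℝ) : ℝ :=
  2 - exp (γ * u) - exp (-γ * u)

/-- The base `e^{γu} - γt(e^{γu} - 1)` of the numerator of the moment generating function, at the
point `p = (t, u)`. -/
noncomputable def hillNumer (γ : ℝ) (p : ℝ × ℝ) : ℝ :=
  exp (γ * p.2) - γ * p.1 * (exp (γ * p.2) - 1)

/-- The base `1 - γt(e^{γu} - 1)` of the denominator of the moment generating function, at the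
point `p = (t, u)`. -/
noncomputable def hillDenom (γ : ℝ) (p : ℝ × ℝ) : ℝ :=
  1 - γ * p.1 * (exp (γ * p.2) - 1)

/-- The moment generating function `η(t, u)` of the first coordinate of the walk along the hill,
as a function of the point `p = (t, u)`. -/
noncomputable def hillMGF (γ X₀ Y₀ : ℝ) (p : ℝ × ℝ) : ℝ :=
  hillNumer γ p ^ (X₀ / γ) / hillDenom γ p ^ (Y₀ / γ)

variable {γ : ℝ} {p : ℝ × ℝ}

lemma exp_mul_hillSpeed (γ u : ℝ) : exp (γ * u) * hillSpeed γ u = -(exp (γ * u) - 1) ^ 2 := by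
  have h_inv : exp (γ * u) * exp (-γ * u) = 1 := by rw [← exp_add]; simp
  unfold hillSpeed
  linear_combination -h_inv

lemma hasLineDerivAt_exp_hillSpeed (γ : ℝ) (p : ℝ × ℝ) :
    HasLineDerivAt ℝ (fun q : ℝ × ℝ => exp (γ * q.2)) (-γ * (exp (γ * p.2) - 1) ^ 2) p
      (1, hillSpeed γ p.2) := by
  have h_snd : HasDerivAt (fun s : ℝ => p.2 + s * hillSpeed γ p.2) (hillSpeed γ p.2) 0 := by
    simpa using ((hasDerivAt_id (0 : ℝ)).mul_const (hillSpeed γ p.2)).const_add p.2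
  refine (h_snd.const_mul γ).exp.congr_deriv ?_
  simp only [zero_mul, add_zero]
  linear_combination γ * exp_mul_hillSpeed γ p.2

lemma hasLineDerivAt_hillDenom (γ : ℝ) (p : ℝ × ℝ) :
    HasLineDerivAt ℝ (hillDenom γ) (-γ * (exp (γ * p.2) - 1) * hillDenom γ p) p
      (1, hillSpeed γ p.2) := by
  have h_fst : HasDerivAt (fun s : ℝ => p.1 + s * 1) 1 0 := by
    simpa using (hasDerivAt_id (0 : ℝ)).const_add p.1
  have h_exp := HasDerivAt.sub_const 1 (hasLineDerivAt_exp_hillSpeed γ p)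
  refine (((h_fst.const_mul γ).mul h_exp).const_sub 1).congr_deriv ?_
  simp only [zero_smul, zero_mul, add_zero, hillDenom]
  ring

lemma hasLineDerivAt_hillNumer (γ : ℝ) (p : ℝ × ℝ) :
    HasLineDerivAt ℝ (hillNumer γ) (-γ * (exp (γ * p.2) - 1) * hillNumer γ p) p
      (1, hillSpeed γ p.2) := by
  have h_eq : hillNumer γ = fun q => exp (γ * q.2) + hillDenom γ q - 1 := by
    funext q
    simp only [hillNumer, hillDenom]
    ring
  rw [h_eq]
  refine (HasDerivAt.sub_const 1 (HasDerivAt.fun_add (hasLineDerivAt_exp_hillSpeed γ p)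
    (hasLineDerivAt_hillDenom γ p))).congr_deriv ?_
  ring

lemma hasLineDerivAt_hillMGF (hγ : γ ≠ 0) (X₀ Y₀ : ℝ) (hA : 0 < hillNumer γ p)
    (hB : 0 < hillDenom γ p) :
    HasLineDerivAt ℝ (hillMGF γ X₀ Y₀) ((Y₀ - X₀) * (exp (γ * p.2) - 1) * hillMGF γ X₀ Y₀ p) p
      (1, hillSpeed γ p.2) := by
  have h_numer :=
    hasLineDerivAt_rpow_const_of_mul_self (hasLineDerivAt_hillNumer γ p) hA.ne' (X₀ / γ)
  have h_denom :=
    hasLineDerivAt_rpow_const_of_mul_self (hasLineDerivAt_hillDenom γ p) hB.ne' (Y₀ / γ)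
  have h_factor : X₀ / γ * (-γ * (exp (γ * p.2) - 1)) - Y₀ / γ * (-γ * (exp (γ * p.2) - 1)) =
      (Y₀ - X₀) * (exp (γ * p.2) - 1) := by
    field_simp
    ring
  rw [← h_factor]
  exact hasLineDerivAt_div_of_mul_self h_numer h_denom (rpow_pos_of_pos hB _).ne'

lemma differentiableAt_hillMGF (X₀ Y₀ : ℝ) (hA : 0 < hillNumer γ p) (hB : 0 < hillDenom γ p) :
    DifferentiableAt ℝ (hillMGF γ X₀ Y₀) p := by
  have h_numer : DifferentiableAt ℝ (hillNumer γ) p := by unfold hillNumer; fun_prop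
  have h_denom : DifferentiableAt ℝ (hillDenom γ) p := by unfold hillDenom; fun_prop
  have h_numer_pow := h_numer.rpow_const (p := X₀ / γ) (Or.inl hA.ne')
  have h_denom_pow := h_denom.rpow_const (p := Y₀ / γ) (Or.inl hB.ne')
  unfold hillMGF
  simpa only [div_eq_mul_inv] using
    h_numer_pow.fun_mul (h_denom_pow.fun_inv (rpow_pos_of_pos hB _).ne')

lemma hillMGF_zero_left (hγ : γ ≠ 0) (X₀ Y₀ u : ℝ) : hillMGF γ X₀ Y₀ (0, u) = exp (u * X₀) := by
  have h_exponent : γ * u * (X₀ / γ) = u * X₀ := by field_simp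
  simp [hillMGF, hillNumer, hillDenom, ← exp_mul, h_exponent]

end Hill

theorem stmt_4_general {γ X₀ Y₀ : ℝ} (hγ : γ ≠ 0) {η : ℝ → ℝ → ℝ}
    (hη : ∀ t u : ℝ, η t u =
      (Real.exp (γ * u) - γ * t * (Real.exp (γ * u) - 1)) ^ (X₀ / γ) /
        (1 - γ * t * (Real.exp (γ * u) - 1)) ^ (Y₀ / γ)) :
    (∀ t u : ℝ,
      0 < 1 - γ * t * (Real.exp (γ * u) - 1) →
      0 < Real.exp (γ * u) - γ * t * (Real.exp (γ * u) - 1) →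
      deriv (fun s => η s u) t
        + (2 - Real.exp (γ * u) - Real.exp (-γ * u)) * deriv (fun w => η t w) u
        + (Y₀ - X₀) * (1 - Real.exp (γ * u)) * η t u = 0) ∧
    (∀ u : ℝ, η 0 u = Real.exp (u * X₀)) := by
  obtain rfl : η = fun t u => hillMGF γ X₀ Y₀ (t, u) := funext₂ hη
  refine ⟨fun t u hB hA => ?_, hillMGF_zero_left hγ X₀ Y₀⟩
  have h_partial := deriv_smul_add_deriv_smul_eq_lineDeriv
    (differentiableAt_hillMGF X₀ Y₀ (p := (t, u)) hA hB) 1 (hillSpeed γ u)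
  rw [(hasLineDerivAt_hillMGF hγ X₀ Y₀ (p := (t, u)) hA hB).lineDeriv, one_smul, smul_eq_mul,
    hillSpeed] at h_partial
  linear_combination h_partial

/-- The moment generating function
`η(t,u) = (e^{γu} - γt(e^{γu}-1))^{X₀/γ} / (1 - γt(e^{γu}-1))^{Y₀/γ}`
of the first coordinate of the walk along a 45-degree hill satisfies
`∂η/∂t + (2 - e^{γu} - e^{-γu})·∂η/∂u + λ(1 - e^{γu})·η = 0` wherever both bases are
positive, and `η(0,u) = e^{u X₀}`, where `λ = Y₀ - X₀`. -/
theorem stmt_4 (γ X₀ Y₀ lam : ℝ) (hγ : 0 < γ) (hX₀ : 0 ≤ X₀) (hXY : X₀ < Y₀)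
    (hlam : lam = Y₀ - X₀)
    (η : ℝ → ℝ → ℝ)
    (hη : ∀ t u : ℝ, η t u =
      (Real.exp (γ * u) - γ * t * (Real.exp (γ * u) - 1)) ^ (X₀ / γ) /
        (1 - γ * t * (Real.exp (γ * u) - 1)) ^ (Y₀ / γ)) :
    (∀ t u : ℝ,
      0 < 1 - γ * t * (Real.exp (γ * u) - 1) →
      0 < Real.exp (γ * u) - γ * t * (Real.exp (γ * u) - 1) →
      deriv (fun s => η s u) t
        + (2 - Real.exp (γ * u) - Real.exp (-γ * u)) * deriv (fun w => η t w) u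
        + lam * (1 - Real.exp (γ * u)) * η t u = 0) ∧
    (∀ u : ℝ, η 0 u = Real.exp (u * X₀)) := by
  subst hlam
  exact stmt_4_general hγ.ne' hη
end

section
/- Let γ > 0 and 0 ≤ X₀ < Y₀ be real numbers, set λ = Y₀ - X₀, and let η(t,u) = (e^{γu} - γt(e^{γu} - 1))^{X₀/γ} / (1 - γt(e^{γu} - 1))^{Y₀/γ}. Then for every real s with γ²s < 1, lim_{t→∞} η(t, s/t) = (1 - γ²s)^{-λ/γ}. -/
/-!
For `u = s / t` the quantity `γt(e^{γu} - 1)` is `γ` times a difference quotient of `x ↦ e^{γsx}`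
at `0`, so it tends to `γ²s`, while `e^{γu}` tends to `1`. Hence the numerator and the denominator
of `η(t, s / t)` are powers of bases with the same positive limit `1 - γ²s`, and the exponents
subtract.
-/

open Bornology Filter Topology

section CoboundedLimits

variable (c : ℝ)

theorem tendsto_exp_div_cobounded : Tendsto (fun t ↦ Real.exp (c / t)) (cobounded ℝ) (𝓝 1) := by
  have hdiv : Tendsto (fun t ↦ c / t) (cobounded ℝ) (𝓝 0) := by
    simpa only [div_eq_mul_inv, mul_zero] using tendsto_inv₀_cobounded.const_mul c
  simpa only [Real.exp_zero] using hdiv.rexp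

theorem tendsto_mul_exp_div_sub_one_cobounded :
    Tendsto (fun t ↦ t * (Real.exp (c / t) - 1)) (cobounded ℝ) (𝓝 c) := by
  have hquot := (Real.hasDerivAt_exp 0).hasFDerivAt.lim c tendsto_norm_cobounded_atTop
  simpa [div_eq_inv_mul] using hquot

end CoboundedLimits

theorem tendsto_rpow_div_rpow {α : Type*} {l : Filter α} {f g : α → ℝ} {c : ℝ}
    (hf : Tendsto f l (𝓝 c)) (hg : Tendsto g l (𝓝 c)) (hc : 0 < c) (a b : ℝ) :
    Tendsto (fun x ↦ f x ^ a / g x ^ b) l (𝓝 (c ^ (a - b))) := by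
  rw [Real.rpow_sub hc]
  exact (hf.rpow_const (.inl hc.ne')).div (hg.rpow_const (.inl hc.ne'))
    (Real.rpow_pos_of_pos hc b).ne'

theorem stmt_7_general (γ a b : ℝ) {s : ℝ} (hs : γ ^ 2 * s < 1) :
    Tendsto (fun t ↦
      (Real.exp (γ * (s / t)) - γ * t * (Real.exp (γ * (s / t)) - 1)) ^ a /
        (1 - γ * t * (Real.exp (γ * (s / t)) - 1)) ^ b)
      (cobounded ℝ) (𝓝 ((1 - γ ^ 2 * s) ^ (a - b))) := by
  have hexp : Tendsto (fun t ↦ Real.exp (γ * (s / t))) (cobounded ℝ) (𝓝 1) := by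
    simpa only [mul_div_assoc] using tendsto_exp_div_cobounded (γ * s)
  have hquot : Tendsto (fun t ↦ γ * t * (Real.exp (γ * (s / t)) - 1)) (cobounded ℝ)
      (𝓝 (γ ^ 2 * s)) := by
    simpa only [mul_div_assoc, ← mul_assoc, ← sq] using
      (tendsto_mul_exp_div_sub_one_cobounded (γ * s)).const_mul γ
  exact tendsto_rpow_div_rpow (hexp.sub hquot) (hquot.const_sub 1) (sub_pos.mpr hs) a b

/-- For the 45-degree-hill moment generating function
`η(t,u) = (e^{γu} - γt(e^{γu}-1))^{X₀/γ} / (1 - γt(e^{γu}-1))^{Y₀/γ}`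
with `λ = Y₀ - X₀`, for every real `s` with `γ²s < 1`,
`lim_{t→∞} η(t, s/t) = (1 - γ²s)^{-λ/γ}`. -/
theorem stmt_7 (γ X₀ Y₀ lam : ℝ) (hγ : 0 < γ) (hX₀ : 0 ≤ X₀) (hXY : X₀ < Y₀)
    (hlam : lam = Y₀ - X₀)
    (η : ℝ → ℝ → ℝ)
    (hη : ∀ t u : ℝ, η t u =
      (Real.exp (γ * u) - γ * t * (Real.exp (γ * u) - 1)) ^ (X₀ / γ) /
        (1 - γ * t * (Real.exp (γ * u) - 1)) ^ (Y₀ / γ)) :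
    ∀ s : ℝ, γ ^ 2 * s < 1 →
      Filter.Tendsto (fun t => η t (s / t)) Filter.atTop
        (nhds ((1 - γ ^ 2 * s) ^ (-(lam / γ)))) := by
  intro s hs
  have hexponent : -(lam / γ) = X₀ / γ - Y₀ / γ := by rw [hlam]; ring
  simpa only [hη, hexponent] using
    (stmt_7_general γ (X₀ / γ) (Y₀ / γ) hs).mono_left IsOrderBornology.atTop_le_cobounded
end

section
/- Let 0 < α < δ, X₀ > 0 and Y₀ ≥ 0 be real numbers. Define φ(t,u,v) = e^{-X₀t}·(e^{-αu} - e^{-αv} + (e^{-δv} - 1 + e^{-δt})^{α/δ})^{-X₀/α} · e^{-Y₀t}·(e^{-δv} - 1 + e^{-δt})^{-Y₀/δ}. Then at every point (t,u,v) with e^{-δv} - 1 + e^{-δt} > 0 and e^{-αu} - e^{-αv} + (e^{-δv} - 1 + e^{-δt})^{α/δ} > 0, φ satisfies the partial differential equation ∂φ/∂t + (1 - e^{αu + (δ-α)v})·∂φ/∂u + (1 - e^{δv})·∂φ/∂v = 0, and φ(0,u,v) = e^{uX₀ + vY₀} for all real u, v. -/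
/-! With the drift `w = (1, 1 - ψ₁, 1 - ψ₂)`, the left-hand side of the PDE is the derivative of `φ`
in the direction `w`. This derivation multiplies each of `e^{-δv} - 1`, `e^{-δt}` by `-δ` and
`e^{-αu} - e^{-αv}` by `-α`. As rates are multiplied by the exponent under powers, both summands of
the outer base of `φ` have rate `-α`, so the four factors of `φ` have rates `-X₀`, `X₀`, `-Y₀`,
`Y₀`. As rates add up under products, `φ` has rate `0`. -/

open Real

section Calculus

variable {𝕜 F : Type*} [NontriviallyNormedField 𝕜] [NormedAddCommGroup F] [NormedSpace 𝕜 F]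

theorem fderiv_apply_eq_sum_partial_deriv {f : 𝕜 × 𝕜 × 𝕜 → F} {t u v : 𝕜}
    (hf : DifferentiableAt 𝕜 f (t, u, v)) (a b c : 𝕜) :
    fderiv 𝕜 f (t, u, v) (a, b, c) =
      a • deriv (fun s ↦ f (s, u, v)) t + b • deriv (fun s ↦ f (t, s, v)) u +
        c • deriv (fun s ↦ f (t, u, s)) v := by
  have ht : deriv (fun s ↦ f (s, u, v)) t = fderiv 𝕜 f (t, u, v) (1, 0, 0) :=
    (hf.hasFDerivAt.comp_hasDerivAt t
      ((hasDerivAt_id t).prodMk (hasDerivAt_const t (u, v)))).deriv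
  have hu : deriv (fun s ↦ f (t, s, v)) u = fderiv 𝕜 f (t, u, v) (0, 1, 0) :=
    (hf.hasFDerivAt.comp_hasDerivAt u
      ((hasDerivAt_const u t).prodMk ((hasDerivAt_id u).prodMk (hasDerivAt_const u v)))).deriv
  have hv : deriv (fun s ↦ f (t, u, s)) v = fderiv 𝕜 f (t, u, v) (0, 0, 1) :=
    (hf.hasFDerivAt.comp_hasDerivAt v
      ((hasDerivAt_const v t).prodMk ((hasDerivAt_const v u).prodMk (hasDerivAt_id v)))).deriv
  rw [ht, hu, hv, ← map_smul, ← map_smul, ← map_smul, ← map_add, ← map_add]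
  simp

end Calculus

section GrowthRate

variable {E : Type*} [NormedAddCommGroup E] [NormedSpace ℝ E]

/-- `f` has growth rate `c` at `p` in the direction `w`: it is differentiable at `p` and its
directional derivative is `c * f p`. If `f p ≠ 0`, this says that the logarithmic derivative of
`f` at `p` in the direction `w` is `c`; if `f p = 0`, that the directional derivative vanishes. -/
structure HasGrowthRateAt (f : E → ℝ) (c : ℝ) (p w : E) : Prop where
  differentiableAt : DifferentiableAt ℝ f p
  fderiv_apply : fderiv ℝ f p w = c * f p

variable {f g : E → ℝ} {c d : ℝ} {p w : E}

theorem HasGrowthRateAt.add (hf : HasGrowthRateAt f c p w) (hg : HasGrowthRateAt g c p w) :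
    HasGrowthRateAt (fun q ↦ f q + g q) c p w where
  differentiableAt := hf.differentiableAt.fun_add hg.differentiableAt
  fderiv_apply := by
    rw [fderiv_fun_add hf.differentiableAt hg.differentiableAt, add_apply,
      hf.fderiv_apply, hg.fderiv_apply, mul_add]

theorem HasGrowthRateAt.mul (hf : HasGrowthRateAt f c p w) (hg : HasGrowthRateAt g d p w) :
    HasGrowthRateAt (fun q ↦ f q * g q) (c + d) p w where
  differentiableAt := hf.differentiableAt.fun_mul hg.differentiableAt
  fderiv_apply := by
    rw [fderiv_fun_mul hf.differentiableAt hg.differentiableAt]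
    simp only [add_apply, smul_apply, smul_eq_mul, hf.fderiv_apply, hg.fderiv_apply]
    ring

theorem HasGrowthRateAt.rpow_const (hf : HasGrowthRateAt f c p w) (hp : f p ≠ 0) (r : ℝ) :
    HasGrowthRateAt (fun q ↦ f q ^ r) (c * r) p w where
  differentiableAt := hf.differentiableAt.rpow_const (Or.inl hp)
  fderiv_apply := by
    rw [(hf.differentiableAt.hasFDerivAt.rpow_const (Or.inl hp)).fderiv,
      smul_apply, hf.fderiv_apply, smul_eq_mul, rpow_sub_one hp]
    field_simp

theorem hasGrowthRateAt_exp_mul (k : ℝ) (L : E →L[ℝ] ℝ) (p w : E) :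
    HasGrowthRateAt (fun q ↦ exp (k * L q)) (k * L w) p w := by
  have hexp := (L.hasFDerivAt (x := p)).const_mul k |>.exp
  refine ⟨hexp.differentiableAt, ?_⟩
  simp only [hexp.fderiv, smul_apply, smul_eq_mul]
  ring

theorem hasGrowthRateAt_exp_mul_sub_exp_mul (k : ℝ) (L M : E →L[ℝ] ℝ)
    (h : (1 - L w) * exp (k * L p) = (1 - M w) * exp (k * M p)) :
    HasGrowthRateAt (fun q ↦ exp (k * L q) - exp (k * M q)) k p w := by
  have hL := hasGrowthRateAt_exp_mul k L p w
  have hM := hasGrowthRateAt_exp_mul k M p w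
  refine ⟨hL.differentiableAt.fun_sub hM.differentiableAt, ?_⟩
  rw [fderiv_fun_sub hL.differentiableAt hM.differentiableAt, sub_apply,
    hL.fderiv_apply, hM.fderiv_apply]
  linear_combination -k * h

end GrowthRate

namespace TriangularWalk

/-- The direction `(1, 1 - ψ₁, 1 - ψ₂)` of the fundamental PDE at the point `(t, u, v)`. -/
noncomputable def drift (α δ : ℝ) (p : ℝ × ℝ × ℝ) : ℝ × ℝ × ℝ :=
  (1, 1 - exp (α * p.2.1 + (δ - α) * p.2.2), 1 - exp (δ * p.2.2))

/-- The base of the power of exponent `-Y₀ / δ` in the moment generating function, as a function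
of `(t, u, v)`. -/
noncomputable def innerBase (δ : ℝ) (p : ℝ × ℝ × ℝ) : ℝ :=
  exp (-δ * p.2.2) - 1 + exp (-δ * p.1)

/-- The base of the power of exponent `-X₀ / α` in the moment generating function, as a function
of `(t, u, v)`. -/
noncomputable def outerBase (α δ : ℝ) (p : ℝ × ℝ × ℝ) : ℝ :=
  exp (-α * p.2.1) - exp (-α * p.2.2) + innerBase δ p ^ (α / δ)

/-- The joint moment generating function `φ` of the walk started at `(X₀, Y₀)`, as a function of
`(t, u, v)`. -/
noncomputable def jointMGF (α δ X₀ Y₀ : ℝ) (p : ℝ × ℝ × ℝ) : ℝ :=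
  exp (-X₀ * p.1) * outerBase α δ p ^ (-X₀ / α) * (exp (-Y₀ * p.1) * innerBase δ p ^ (-Y₀ / δ))

variable {α δ : ℝ} {p : ℝ × ℝ × ℝ}

theorem hasGrowthRateAt_exp_mul_time (α δ k : ℝ) (p : ℝ × ℝ × ℝ) :
    HasGrowthRateAt (fun q ↦ exp (k * q.1)) k p (drift α δ p) := by
  simpa [drift] using hasGrowthRateAt_exp_mul k (.fst ℝ ℝ (ℝ × ℝ)) p (drift α δ p)

theorem hasGrowthRateAt_exp_sub_one (α δ : ℝ) (p : ℝ × ℝ × ℝ) :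
    HasGrowthRateAt (fun q ↦ exp (-δ * q.2.2) - 1) (-δ) p (drift α δ p) := by
  have h : (1 - (drift α δ p).2.2) * exp (-δ * p.2.2) = 1 := by
    rw [drift, sub_sub_cancel, ← exp_add, ← add_mul, add_neg_cancel, zero_mul, exp_zero]
  -- The constant `1` is the exponential of the zero functional.
  simpa using hasGrowthRateAt_exp_mul_sub_exp_mul (-δ)
    (.comp (.snd ℝ ℝ ℝ) (.snd ℝ ℝ (ℝ × ℝ))) 0 (p := p) (w := drift α δ p) (by simpa using h)

theorem hasGrowthRateAt_exp_sub_exp (α δ : ℝ) (p : ℝ × ℝ × ℝ) :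
    HasGrowthRateAt (fun q ↦ exp (-α * q.2.1) - exp (-α * q.2.2)) (-α) p (drift α δ p) := by
  have h : (1 - (drift α δ p).2.1) * exp (-α * p.2.1) =
      (1 - (drift α δ p).2.2) * exp (-α * p.2.2) := by
    simp only [drift, sub_sub_cancel, ← exp_add]
    ring_nf
  exact hasGrowthRateAt_exp_mul_sub_exp_mul (-α)
    (.comp (.fst ℝ ℝ ℝ) (.snd ℝ ℝ (ℝ × ℝ))) (.comp (.snd ℝ ℝ ℝ) (.snd ℝ ℝ (ℝ × ℝ))) h

theorem hasGrowthRateAt_innerBase (α δ : ℝ) (p : ℝ × ℝ × ℝ) :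
    HasGrowthRateAt (innerBase δ) (-δ) p (drift α δ p) :=
  (hasGrowthRateAt_exp_sub_one α δ p).add (hasGrowthRateAt_exp_mul_time α δ (-δ) p)

theorem hasGrowthRateAt_outerBase (hδ : δ ≠ 0) (hp : innerBase δ p ≠ 0) :
    HasGrowthRateAt (outerBase α δ) (-α) p (drift α δ p) := by
  have hpow := (hasGrowthRateAt_innerBase α δ p).rpow_const hp (α / δ)
  rw [neg_mul, mul_div_cancel₀ α hδ] at hpow
  exact (hasGrowthRateAt_exp_sub_exp α δ p).add hpow

theorem hasGrowthRateAt_jointMGF (hα : α ≠ 0) (hδ : δ ≠ 0) (X₀ Y₀ : ℝ)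
    (hinner : innerBase δ p ≠ 0) (houter : outerBase α δ p ≠ 0) :
    HasGrowthRateAt (jointMGF α δ X₀ Y₀) 0 p (drift α δ p) := by
  have hX := (hasGrowthRateAt_exp_mul_time α δ (-X₀) p).mul
    ((hasGrowthRateAt_outerBase hδ hinner).rpow_const houter (-X₀ / α))
  have hY := (hasGrowthRateAt_exp_mul_time α δ (-Y₀) p).mul
    ((hasGrowthRateAt_innerBase α δ p).rpow_const hinner (-Y₀ / δ))
  have hrate : -X₀ + -α * (-X₀ / α) + (-Y₀ + -δ * (-Y₀ / δ)) = 0 := by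
    field_simp
    ring
  exact hrate ▸ hX.mul hY

theorem innerBase_time_zero (δ u v : ℝ) : innerBase δ (0, u, v) = exp (-δ * v) := by
  simp [innerBase]

theorem outerBase_time_zero (hδ : δ ≠ 0) (u v : ℝ) : outerBase α δ (0, u, v) = exp (-α * u) := by
  have hexp : -δ * v * (α / δ) = -α * v := by field_simp
  rw [outerBase, innerBase_time_zero, ← exp_mul, hexp, sub_add_cancel]

theorem jointMGF_time_zero (hα : α ≠ 0) (hδ : δ ≠ 0) (X₀ Y₀ u v : ℝ) :
    jointMGF α δ X₀ Y₀ (0, u, v) = exp (u * X₀ + v * Y₀) := by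
  rw [jointMGF, innerBase_time_zero, outerBase_time_zero hδ, ← exp_mul, ← exp_mul, ← exp_add,
    ← exp_add, ← exp_add]
  congr 1
  field_simp
  ring

end TriangularWalk

theorem stmt_8_general (α δ X₀ Y₀ : ℝ) (hα : α ≠ 0) (hδ : δ ≠ 0) (φ : ℝ → ℝ → ℝ → ℝ)
    (hφ : ∀ t u v : ℝ, φ t u v =
      Real.exp (-X₀ * t) *
        (Real.exp (-α * u) - Real.exp (-α * v) +
          (Real.exp (-δ * v) - 1 + Real.exp (-δ * t)) ^ (α / δ)) ^ (-X₀ / α) *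
      (Real.exp (-Y₀ * t) *
        (Real.exp (-δ * v) - 1 + Real.exp (-δ * t)) ^ (-Y₀ / δ))) :
    (∀ t u v : ℝ,
      0 < Real.exp (-δ * v) - 1 + Real.exp (-δ * t) →
      0 < Real.exp (-α * u) - Real.exp (-α * v) +
            (Real.exp (-δ * v) - 1 + Real.exp (-δ * t)) ^ (α / δ) →
      deriv (fun s => φ s u v) t
        + (1 - Real.exp (α * u + (δ - α) * v)) * deriv (fun w => φ t w v) u
        + (1 - Real.exp (δ * v)) * deriv (fun w => φ t u w) v = 0) ∧
    (∀ u v : ℝ, φ 0 u v = Real.exp (u * X₀ + v * Y₀)) := by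
  obtain rfl : φ = fun t u v ↦ TriangularWalk.jointMGF α δ X₀ Y₀ (t, u, v) := by
    funext t u v
    exact hφ t u v
  refine ⟨fun t u v hinner houter ↦ ?_, TriangularWalk.jointMGF_time_zero hα hδ X₀ Y₀⟩
  have hrate := TriangularWalk.hasGrowthRateAt_jointMGF (p := (t, u, v)) hα hδ X₀ Y₀
    hinner.ne' houter.ne'
  simpa [TriangularWalk.drift, fderiv_apply_eq_sum_partial_deriv hrate.differentiableAt] using
    hrate.fderiv_apply

/-- The joint moment generating function
`φ(t,u,v) = e^{-X₀t}(e^{-αu} - e^{-αv} + (e^{-δv} - 1 + e^{-δt})^{α/δ})^{-X₀/α}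
  · e^{-Y₀t}(e^{-δv} - 1 + e^{-δt})^{-Y₀/δ}`
of the balanced triangular continuum random walk satisfies the fundamental PDE
`∂φ/∂t + (1 - e^{αu + (δ-α)v})∂φ/∂u + (1 - e^{δv})∂φ/∂v = 0` wherever the bases are
positive, and `φ(0,u,v) = e^{uX₀ + vY₀}`. -/
theorem stmt_8 (α δ X₀ Y₀ : ℝ) (hα : 0 < α) (hαδ : α < δ) (hX₀ : 0 < X₀) (hY₀ : 0 ≤ Y₀)
    (φ : ℝ → ℝ → ℝ → ℝ)
    (hφ : ∀ t u v : ℝ, φ t u v =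
      Real.exp (-X₀ * t) *
        (Real.exp (-α * u) - Real.exp (-α * v) +
          (Real.exp (-δ * v) - 1 + Real.exp (-δ * t)) ^ (α / δ)) ^ (-X₀ / α) *
      (Real.exp (-Y₀ * t) *
        (Real.exp (-δ * v) - 1 + Real.exp (-δ * t)) ^ (-Y₀ / δ))) :
    (∀ t u v : ℝ,
      0 < Real.exp (-δ * v) - 1 + Real.exp (-δ * t) →
      0 < Real.exp (-α * u) - Real.exp (-α * v) +
            (Real.exp (-δ * v) - 1 + Real.exp (-δ * t)) ^ (α / δ) →
      deriv (fun s => φ s u v) t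
        + (1 - Real.exp (α * u + (δ - α) * v)) * deriv (fun w => φ t w v) u
        + (1 - Real.exp (δ * v)) * deriv (fun w => φ t u w) v = 0) ∧
    (∀ u v : ℝ, φ 0 u v = Real.exp (u * X₀ + v * Y₀)) :=
  stmt_8_general α δ X₀ Y₀ hα.ne' (hα.trans hαδ).ne' φ hφ
end

section
/- Let 0 < α < δ be real numbers and let F : ℝ × ℝ → ℝ be a differentiable function. Define φ(t,u,v) = F(e^{αt}(e^{-αu} - e^{-αv}), e^{δt}(e^{-δv} - 1)). Then φ satisfies the partial differential equation ∂φ/∂t + (1 - e^{αu + (δ-α)v})·∂φ/∂u + (1 - e^{δv})·∂φ/∂v = 0 at every point (t,u,v) ∈ ℝ³. -/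
/-!
Write `D = ∂ₜ + (1 - A) ∂ᵤ + (1 - B) ∂ᵥ` with `A = e^{αu + (δ-α)v}` and `B = e^{δv}`, so that
`D (t - u) = A` and `D (t - v) = B`. The two arguments of `F` are `e^{α(t-u)} - e^{α(t-v)}` and
`e^{δ(t-v)} - e^{δt}`. Both are annihilated by `D`, because `e^{α(t-u)} A = e^{α(t-v)} B` and
`e^{δ(t-v)} B = e^{δt}`. By the chain rule, `D` annihilates every differentiable function of them.
-/

section PartialDerivatives

variable {𝕜 E : Type*} [NontriviallyNormedField 𝕜] [NormedAddCommGroup E] [NormedSpace 𝕜 E]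

theorem fderiv_apply_eq_smul_deriv_add {f : 𝕜 × 𝕜 × 𝕜 → E} {t u v : 𝕜}
    (hf : DifferentiableAt 𝕜 f (t, u, v)) (a b c : 𝕜) :
    fderiv 𝕜 f (t, u, v) (a, b, c) =
      a • deriv (fun s => f (s, u, v)) t + b • deriv (fun s => f (t, s, v)) u
        + c • deriv (fun s => f (t, u, s)) v := by
  have h_fst : HasDerivAt (fun s => f (s, u, v)) (fderiv 𝕜 f (t, u, v) (1, 0, 0)) t :=
    hf.hasFDerivAt.comp_hasDerivAt t ((hasDerivAt_id t).prodMk (hasDerivAt_const t (u, v)))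
  have h_snd : HasDerivAt (fun s => f (t, s, v)) (fderiv 𝕜 f (t, u, v) (0, 1, 0)) u :=
    hf.hasFDerivAt.comp_hasDerivAt u
      ((hasDerivAt_const u t).prodMk ((hasDerivAt_id u).prodMk (hasDerivAt_const u v)))
  have h_trd : HasDerivAt (fun s => f (t, u, s)) (fderiv 𝕜 f (t, u, v) (0, 0, 1)) v :=
    hf.hasFDerivAt.comp_hasDerivAt v
      ((hasDerivAt_const v t).prodMk ((hasDerivAt_const v u).prodMk (hasDerivAt_id v)))
  rw [h_fst.deriv, h_snd.deriv, h_trd.deriv, ← map_smul, ← map_smul, ← map_smul, ← map_add,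
    ← map_add]
  simp only [Prod.smul_mk, smul_eq_mul, mul_one, mul_zero, Prod.mk_add_mk, add_zero, zero_add]

end PartialDerivatives

section Characteristics

open Real

/-- The coefficients of `∂/∂t`, `∂/∂u`, `∂/∂v` in the fundamental PDE, as a vector field on the
space of points `p = (t, u, v)`. -/
noncomputable def characteristicField (α δ : ℝ) (p : ℝ × ℝ × ℝ) : ℝ × ℝ × ℝ :=
  (1, 1 - exp (α * p.2.1 + (δ - α) * p.2.2), 1 - exp (δ * p.2.2))

/-- The pair `(x_c, y_c)` of characteristic coordinates of the point `p = (t, u, v)`; they are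
constant along the integral curves of `characteristicField α δ`. -/
noncomputable def characteristicMap (α δ : ℝ) (p : ℝ × ℝ × ℝ) : ℝ × ℝ :=
  (exp (α * p.1) * (exp (-α * p.2.1) - exp (-α * p.2.2)),
    exp (δ * p.1) * (exp (-δ * p.2.2) - 1))

theorem characteristicMap_eq_exp_sub_exp (α δ : ℝ) :
    characteristicMap α δ = fun p =>
      (exp (α * (p.1 - p.2.1)) - exp (α * (p.1 - p.2.2)),
        exp (δ * (p.1 - p.2.2)) - exp (δ * p.1)) := by
  funext p
  simp only [characteristicMap, mul_sub, ← exp_add, neg_mul, ← sub_eq_add_neg, mul_one]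

theorem differentiable_characteristicMap (α δ : ℝ) :
    Differentiable ℝ (characteristicMap α δ) := by
  unfold characteristicMap
  fun_prop

theorem fderiv_characteristicMap_apply (α δ t u v a b c : ℝ) :
    fderiv ℝ (characteristicMap α δ) (t, u, v) (a, b, c) =
      (α * (exp (α * (t - u)) * (a - b) - exp (α * (t - v)) * (a - c)),
        δ * (exp (δ * (t - v)) * (a - c) - exp (δ * t) * a)) := by
  have h_time : HasFDerivAt (fun p : ℝ × ℝ × ℝ => p.1) (.fst ℝ ℝ (ℝ × ℝ)) (t, u, v) :=
    hasFDerivAt_fst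
  have h_space : HasFDerivAt (fun p : ℝ × ℝ × ℝ => p.2) (.snd ℝ ℝ (ℝ × ℝ)) (t, u, v) :=
    hasFDerivAt_snd
  have h_tu := h_time.fun_sub h_space.fst
  have h_tv := h_time.fun_sub h_space.snd
  have h_map := ((h_tu.const_mul α).exp.fun_sub (h_tv.const_mul α).exp).prodMk
    ((h_tv.const_mul δ).exp.fun_sub (h_time.const_mul δ).exp)
  rw [characteristicMap_eq_exp_sub_exp, h_map.fderiv]
  simp only [ContinuousLinearMap.prod_apply, sub_apply, smul_apply, ContinuousLinearMap.coe_fst',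
    ContinuousLinearMap.comp_apply, ContinuousLinearMap.coe_snd', smul_eq_mul, Prod.mk.injEq]
  constructor <;> ring

theorem fderiv_characteristicMap_characteristicField (α δ : ℝ) (p : ℝ × ℝ × ℝ) :
    fderiv ℝ (characteristicMap α δ) p (characteristicField α δ p) = 0 := by
  obtain ⟨t, u, v⟩ := p
  have h_x : exp (α * (t - u)) * exp (α * u + (δ - α) * v) =
      exp (α * (t - v)) * exp (δ * v) := by
    rw [← exp_add, ← exp_add]
    congr 1
    ring
  have h_y : exp (δ * (t - v)) * exp (δ * v) = exp (δ * t) := by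
    rw [← exp_add]
    congr 1
    ring
  rw [characteristicField, fderiv_characteristicMap_apply]
  simp only [sub_sub_cancel, mul_one, h_x, h_y, sub_self, mul_zero, Prod.mk_zero_zero]

variable {E : Type*} [NormedAddCommGroup E] [NormedSpace ℝ E]

theorem stmt_11_general (α δ : ℝ) {F : ℝ × ℝ → E} {t u v : ℝ}
    (hF : DifferentiableAt ℝ F (characteristicMap α δ (t, u, v))) :
    deriv (fun s => F (characteristicMap α δ (s, u, v))) t
      + (1 - exp (α * u + (δ - α) * v)) • deriv (fun w => F (characteristicMap α δ (t, w, v))) u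
      + (1 - exp (δ * v)) • deriv (fun w => F (characteristicMap α δ (t, u, w))) v = 0 := by
  have h_map := differentiable_characteristicMap α δ (t, u, v)
  calc
    _ = fderiv ℝ (F ∘ characteristicMap α δ) (t, u, v) (characteristicField α δ (t, u, v)) := by
      rw [characteristicField, fderiv_apply_eq_smul_deriv_add (hF.comp _ h_map), one_smul]
      rfl
    _ = fderiv ℝ F (characteristicMap α δ (t, u, v))
          (fderiv ℝ (characteristicMap α δ) (t, u, v) (characteristicField α δ (t, u, v))) := by
      rw [fderiv_comp _ hF h_map, ContinuousLinearMap.comp_apply]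
    _ = 0 := by
      rw [fderiv_characteristicMap_characteristicField, map_zero]

end Characteristics

/-- For `0 < α < δ` and any differentiable `F : ℝ × ℝ → ℝ`, the function
`φ(t,u,v) = F(e^{αt}(e^{-αu} - e^{-αv}), e^{δt}(e^{-δv} - 1))` solves the fundamental
PDE `∂φ/∂t + (1 - e^{αu + (δ-α)v})∂φ/∂u + (1 - e^{δv})∂φ/∂v = 0` everywhere. -/
theorem stmt_11 (α δ : ℝ) (hα : 0 < α) (hαδ : α < δ)
    (F : ℝ × ℝ → ℝ) (hF : Differentiable ℝ F)
    (φ : ℝ → ℝ → ℝ → ℝ)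
    (hφ : ∀ t u v : ℝ, φ t u v =
      F (Real.exp (α * t) * (Real.exp (-α * u) - Real.exp (-α * v)),
         Real.exp (δ * t) * (Real.exp (-δ * v) - 1))) :
    ∀ t u v : ℝ,
      deriv (fun s => φ s u v) t
        + (1 - Real.exp (α * u + (δ - α) * v)) * deriv (fun w => φ t w v) u
        + (1 - Real.exp (δ * v)) * deriv (fun w => φ t u w) v = 0 := by
  obtain rfl : φ = fun t u v => F (characteristicMap α δ (t, u, v)) := by
    funext t u v
    exact hφ t u v
  exact fun t u v => stmt_11_general α δ (hF _)
end

section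
/- Let i > 0 and δ > 0 be real numbers, let t > 0, and let v be a real number with e^{δv}·(1 - e^{-δt}) < 1. Then the series ∑_{ℓ=0}^{∞} ((∏_{k=0}^{ℓ-1}(i/δ + k))/ℓ!) · e^{-it}·(1 - e^{-δt})^ℓ · e^{v(i + δℓ)} converges and its sum equals (1 - e^{δt} + e^{δ(t-v)})^{-i/δ}. -/
/-!
For `|x| < 1` the negative binomial series is `∑ a(a+1)⋯(a+n-1)/n! xⁿ = (1 - x)^(-a)`. With
`a = i/δ` and `x = e^{δv}(1 - e^{-δt})`, the `ℓ`-th summand is `e^{i(v-t)}` times the `ℓ`-th term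
of this series, and `e^{i(v-t)}` is the factor `(e^{δ(t-v)})^{-i/δ}` of the claimed sum, because
`1 - e^{δt} + e^{δ(t-v)} = e^{δ(t-v)}(1 - x)`.
-/

open Finset

lemma ascPochhammer_eval_eq_prod_range_add {R : Type*} [CommSemiring R] (a : R) (n : ℕ) :
    (ascPochhammer R n).eval a = ∏ k ∈ range n, (a + k) := by
  induction n with
  | zero => simp
  | succ n ih => rw [ascPochhammer_succ_eval, prod_range_succ, ih]

lemma choose_add_sub_one_eq_prod_div_factorial {K : Type*} [Field K] [CharZero K]
    (a : K) (n : ℕ) :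
    Ring.choose (a + n - 1) n = (∏ k ∈ range n, (a + k)) / n.factorial := by
  rw [← Ring.multichoose_eq, eq_div_iff (Nat.cast_ne_zero.2 n.factorial_ne_zero), mul_comm,
    ← nsmul_eq_mul, Ring.factorial_nsmul_multichoose_eq_ascPochhammer,
    Polynomial.ascPochhammer_smeval_eq_eval, ascPochhammer_eval_eq_prod_range_add]

lemma hasSum_one_sub_rpow_neg (a : ℝ) {x : ℝ} (hx : |x| < 1) :
    HasSum (fun n : ℕ => (∏ k ∈ range n, (a + k)) / n.factorial * x ^ n)
      ((1 - x) ^ (-a)) := by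
  have hx_mem : x ∈ Metric.eball (0 : ℝ) 1 := by
    rw [← ENNReal.ofReal_one, Metric.eball_ofReal]
    simpa using hx
  have hsum := (Real.one_div_one_sub_rpow_hasFPowerSeriesOnBall_zero a).hasSum hx_mem
  have h_one_sub : 0 ≤ 1 - x := sub_nonneg.2 (abs_lt.1 hx).2.le
  simpa [choose_add_sub_one_eq_prod_div_factorial, Real.rpow_neg h_one_sub, mul_comm] using hsum

lemma one_sub_exp_add_exp_sub (a b : ℝ) :
    1 - Real.exp a + Real.exp (a - b) =
      Real.exp (a - b) * (1 - Real.exp b * (1 - Real.exp (-a))) := by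
  rw [Real.exp_sub, Real.exp_neg]
  field_simp
  ring

lemma exp_neg_mul_mul_exp_mul_add_mul_nat (i δ t v : ℝ) (ℓ : ℕ) :
    Real.exp (-i * t) * Real.exp (v * (i + δ * ℓ)) =
      Real.exp (i * (v - t)) * Real.exp (δ * v) ^ ℓ := by
  rw [← Real.exp_nat_mul, ← Real.exp_add, ← Real.exp_add]
  ring_nf

lemma exp_mul_sub_rpow_neg_div {δ : ℝ} (hδ : δ ≠ 0) (i t v : ℝ) :
    Real.exp (δ * (t - v)) ^ (-i / δ) = Real.exp (i * (v - t)) := by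
  rw [← Real.exp_mul]
  congr 1
  field_simp
  ring

theorem stmt_13_general (i δ t v : ℝ) (hδ : δ ≠ 0)
    (hv : |Real.exp (δ * v) * (1 - Real.exp (-δ * t))| < 1) :
    HasSum
      (fun ℓ : ℕ =>
        (∏ k ∈ range ℓ, (i / δ + k)) / (Nat.factorial ℓ) *
          Real.exp (-i * t) * (1 - Real.exp (-δ * t)) ^ ℓ *
          Real.exp (v * (i + δ * ℓ)))
      ((1 - Real.exp (δ * t) + Real.exp (δ * (t - v))) ^ (-i / δ)) := by
  set x := Real.exp (δ * v) * (1 - Real.exp (-δ * t)) with hx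
  have h_base : 1 - Real.exp (δ * t) + Real.exp (δ * (t - v)) =
      Real.exp (δ * (t - v)) * (1 - x) := by
    rw [hx, mul_sub, neg_mul, one_sub_exp_add_exp_sub]
  have h_one_sub : 0 ≤ 1 - x := sub_nonneg.2 (abs_lt.1 hv).2.le
  rw [h_base, Real.mul_rpow (Real.exp_pos _).le h_one_sub, exp_mul_sub_rpow_neg_div hδ, neg_div]
  refine ((hasSum_one_sub_rpow_neg (i / δ) hv).mul_left _).congr_fun fun ℓ => ?_
  rw [hx, mul_pow]
  linear_combination (∏ k ∈ range ℓ, (i / δ + k)) / ℓ.factorial *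
    (1 - Real.exp (-δ * t)) ^ ℓ * exp_neg_mul_mul_exp_mul_add_mul_nat i δ t v ℓ

/-- For `i, δ > 0`, `t > 0` and `e^{δv}(1 - e^{-δt}) < 1`, the series
`∑_ℓ ((∏_{k=0}^{ℓ-1}(i/δ+k))/ℓ!) e^{-it}(1-e^{-δt})^ℓ e^{v(i+δℓ)}` converges with sum
`(1 - e^{δt} + e^{δ(t-v)})^{-i/δ}`. -/
theorem stmt_13 (i δ t v : ℝ) (hi : 0 < i) (hδ : 0 < δ) (ht : 0 < t)
    (hv : Real.exp (δ * v) * (1 - Real.exp (-δ * t)) < 1) :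
    HasSum
      (fun ℓ : ℕ =>
        (∏ k ∈ Finset.range ℓ, (i / δ + k)) / (Nat.factorial ℓ) *
          Real.exp (-i * t) * (1 - Real.exp (-δ * t)) ^ ℓ *
          Real.exp (v * (i + δ * ℓ)))
      ((1 - Real.exp (δ * t) + Real.exp (δ * (t - v))) ^ (-i / δ)) := by
  have h_exp_le : Real.exp (-δ * t) ≤ 1 :=
    Real.exp_le_one_iff.2 (mul_nonpos_of_nonpos_of_nonneg (neg_nonpos.2 hδ.le) ht.le)
  exact stmt_13_general i δ t v hδ.ne' <| by
    rwa [abs_of_nonneg (mul_nonneg (Real.exp_pos _).le (sub_nonneg.2 h_exp_le))]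
end

section
/- Let 0 < α < δ, X₀ > 0 and Y₀ ≥ 0 be real numbers, and let φ(t,u,v) = e^{-X₀t}·(e^{-αu} - e^{-αv} + (e^{-δv} - 1 + e^{-δt})^{α/δ})^{-X₀/α} · e^{-Y₀t}·(e^{-δv} - 1 + e^{-δt})^{-Y₀/δ}. Then for every real t, the second partial derivative of φ with respect to u, evaluated at (t, 0, 0), equals X₀(α + X₀)·e^{2αt} - αX₀·e^{αt}. -/
/-!
At `v = 0` the factor carrying `Y₀` cancels and `(e^{-δt})^{α/δ} = e^{-αt}`, so `φ(t, u, 0)` is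
`e^{-X₀t}` times a real power of `e^{-αt} - 1 + e^{-αu}`. Differentiating twice with the
second-order chain rule produces powers of that base, which at `u = 0` is `e^{-αt} > 0`.
-/

open Real

theorem iteratedDeriv_two_rpow_const {f : ℝ → ℝ} {x p : ℝ} (hf : ContDiffAt ℝ 2 f x)
    (hx : f x ≠ 0 ∨ 2 ≤ p) :
    iteratedDeriv 2 (fun y => f y ^ p) x =
      p * (p - 1) * f x ^ (p - 2) * deriv f x ^ 2 + p * f x ^ (p - 1) * iteratedDeriv 2 f x := by
  have hpow : ContDiffAt ℝ 2 (fun y : ℝ => y ^ p) (f x) :=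
    contDiffAt_rpow_const (mod_cast hx)
  have hpow_two : iteratedDeriv 2 (fun y : ℝ => y ^ p) (f x) = p * (p - 1) * f x ^ (p - 2) := by
    rw [iteratedDeriv_eq_iterate, iter_deriv_rpow_const]
    simp [descPochhammer_succ_right]
  calc iteratedDeriv 2 ((fun y => y ^ p) ∘ f) x
      = iteratedDeriv 2 (fun y => y ^ p) (f x) * deriv f x ^ 2 +
          deriv (fun y => y ^ p) (f x) * iteratedDeriv 2 f x := iteratedDeriv_comp_two hpow hf
    _ = _ := by rw [hpow_two, Real.deriv_rpow_const]

theorem iteratedDeriv_two_const_add_exp_rpow {a c p x : ℝ}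
    (hx : c + exp (a * x) ≠ 0 ∨ 2 ≤ p) :
    iteratedDeriv 2 (fun u => (c + exp (a * u)) ^ p) x =
      p * (p - 1) * (c + exp (a * x)) ^ (p - 2) * (a * exp (a * x)) ^ 2 +
        p * (c + exp (a * x)) ^ (p - 1) * (a ^ 2 * exp (a * x)) := by
  have hderiv : deriv (fun u => c + exp (a * u)) x = a * exp (a * x) := by
    rw [deriv_const_add, ← iteratedDeriv_one, iteratedDeriv_exp_const_mul, pow_one]
  have hderiv_two : iteratedDeriv 2 (fun u => c + exp (a * u)) x = a ^ 2 * exp (a * x) := by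
    rw [iteratedDeriv_const_add two_pos, iteratedDeriv_exp_const_mul]
  rw [← hderiv, ← hderiv_two]
  exact iteratedDeriv_two_rpow_const (by fun_prop) hx

theorem exp_neg_mul_mul_exp_neg_mul_rpow {a : ℝ} (ha : a ≠ 0) (b s t : ℝ) :
    exp (-b * t) * exp (-a * t) ^ (-b / a - s) = exp (s * a * t) := by
  rw [← exp_mul, ← exp_add]
  congr 1
  field_simp
  ring

/-- The joint moment generating function `φ(t, u, v) = E[e^{uX(t) + vY(t)}]` of the continuum
random walk of the balanced triangular scheme with navigation matrix `((α, δ - α), (0, δ))`,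
started at `(X₀, Y₀)`. It is encoded by its closed form, in which the real powers have their
intended meaning only where their bases are positive. -/
noncomputable def balancedTriangularMGF (α δ X₀ Y₀ t u v : ℝ) : ℝ :=
  exp (-X₀ * t) *
    (exp (-α * u) - exp (-α * v) + (exp (-δ * v) - 1 + exp (-δ * t)) ^ (α / δ)) ^ (-X₀ / α) *
  (exp (-Y₀ * t) * (exp (-δ * v) - 1 + exp (-δ * t)) ^ (-Y₀ / δ))

section BalancedTriangular

variable {α δ : ℝ} (X₀ Y₀ t : ℝ)

theorem balancedTriangularMGF_zero_right (hδ : δ ≠ 0) (u : ℝ) :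
    balancedTriangularMGF α δ X₀ Y₀ t u 0 =
      exp (-X₀ * t) * (exp (-α * t) - 1 + exp (-α * u)) ^ (-X₀ / α) := by
  have hY : exp (-Y₀ * t) * exp (-δ * t) ^ (-Y₀ / δ) = 1 := by
    simpa using exp_neg_mul_mul_exp_neg_mul_rpow hδ Y₀ 0 t
  have hpow : exp (-δ * t) ^ (α / δ) = exp (-α * t) := by
    rw [← exp_mul]
    congr 1
    field_simp
  simp only [balancedTriangularMGF, mul_zero, exp_zero, sub_self, zero_add, hpow, hY, mul_one]
  ring_nf

theorem stmt_19_general (hα : α ≠ 0) (hδ : δ ≠ 0) :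
    iteratedDeriv 2 (fun u => balancedTriangularMGF α δ X₀ Y₀ t u 0) 0 =
      X₀ * (α + X₀) * exp (2 * α * t) - α * X₀ * exp (α * t) := by
  have hbase : exp (-α * t) - 1 + exp (-α * 0) = exp (-α * t) := by simp
  have hne : exp (-α * t) - 1 + exp (-α * 0) ≠ 0 := hbase.trans_ne (exp_ne_zero _)
  set p := -X₀ / α with hp
  have hpα : p * α = -X₀ := div_mul_cancel₀ _ hα
  simp only [balancedTriangularMGF_zero_right X₀ Y₀ t hδ]
  calc iteratedDeriv 2
        (fun u => exp (-X₀ * t) * (exp (-α * t) - 1 + exp (-α * u)) ^ p) 0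
      = exp (-X₀ * t) * (p * (p - 1) * exp (-α * t) ^ (p - 2) * (-α) ^ 2 +
          p * exp (-α * t) ^ (p - 1) * (-α) ^ 2) := by
        rw [iteratedDeriv_const_mul_field, iteratedDeriv_two_const_add_exp_rpow (.inl hne), hbase,
          mul_zero, exp_zero, mul_one, mul_one]
    _ = p * α * (p * α - α) * (exp (-X₀ * t) * exp (-α * t) ^ (p - 2)) +
          p * α * α * (exp (-X₀ * t) * exp (-α * t) ^ (p - 1)) := by ring
    _ = X₀ * (α + X₀) * exp (2 * α * t) - α * X₀ * exp (α * t) := by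
        rw [hpα, hp, exp_neg_mul_mul_exp_neg_mul_rpow hα, exp_neg_mul_mul_exp_neg_mul_rpow hα]
        ring_nf

end BalancedTriangular

/-- For the balanced-triangular joint moment generating function
`φ(t,u,v)`, the second partial derivative with respect to `u` at `(t,0,0)` equals
`X₀(α + X₀)·e^{2αt} - αX₀·e^{αt}` (the second moment `E[X(t)²]`). -/
theorem stmt_19 (α δ X₀ Y₀ : ℝ) (hα : 0 < α) (hαδ : α < δ) (hX₀ : 0 < X₀) (hY₀ : 0 ≤ Y₀)
    (φ : ℝ → ℝ → ℝ → ℝ)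
    (hφ : ∀ t u v : ℝ, φ t u v =
      Real.exp (-X₀ * t) *
        (Real.exp (-α * u) - Real.exp (-α * v) +
          (Real.exp (-δ * v) - 1 + Real.exp (-δ * t)) ^ (α / δ)) ^ (-X₀ / α) *
      (Real.exp (-Y₀ * t) *
        (Real.exp (-δ * v) - 1 + Real.exp (-δ * t)) ^ (-Y₀ / δ))) :
    ∀ t : ℝ, iteratedDeriv 2 (fun u => φ t u 0) 0
      = X₀ * (α + X₀) * Real.exp (2 * α * t) - α * X₀ * Real.exp (α * t) := by
  obtain rfl : φ = balancedTriangularMGF α δ X₀ Y₀ := by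
    ext t u v
    exact hφ t u v
  exact fun t => stmt_19_general X₀ Y₀ t hα.ne' (hα.trans hαδ).ne'
end
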